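/- Let P ≥ 1 be an integer and for y ∈ [−1/2, 1/2] define A_P(y) = ∑_{k ∈ ℤ, k ≠ 0} |k + y|^{−(2P+1)}. Then A_P(1/2) = 2^{2P+1} + (2/(2P)!)·∫_0^∞ v^{2P}·e^{−3v/2}/(1 − e^{−v}) dv, and A_P(y) ≤ A_P(1/2) for every y ∈ [−1/2, 1/2]. -/

import Mathlib

open Real MeasureTheory

/-!
Separating positive and negative `k`, the series is `ζ(s, 1 + y) + ζ(s, 1 - y)`, with `ζ(s, ·)` the
Hurwitz zeta function and `s = 2P + 1`. As `ζ(s, ·)` is a sum of convex functions, this is convex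
and even in `y`, so on every interval `[-r, r]` with `r < 1` it is largest at the endpoints. At
`y = 1/2` the relation `ζ(s, 1/2) = 2 ^ s + ζ(s, 3/2)` reduces the value to `ζ(s, 3/2)`, whose
integral representation is the termwise Mellin transform of
`exp (-a t) / (1 - exp (-t)) = ∑ exp (-(n + a) t)`.
-/

theorem convexOn_tsum {ι 𝕜 E β : Type*} [Semiring 𝕜] [PartialOrder 𝕜] [AddCommMonoid E]
    [Module 𝕜 E] [AddCommMonoid β] [PartialOrder β] [IsOrderedAddMonoid β] [Module 𝕜 β]
    [TopologicalSpace β] [OrderClosedTopology β] [ContinuousAdd β] [ContinuousConstSMul 𝕜 β]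
    {S : Set E} {f : ι → E → β} (hS : Convex 𝕜 S) (hf : ∀ i, ConvexOn 𝕜 S (f i))
    (hsum : ∀ x ∈ S, Summable fun i ↦ f i x) :
    ConvexOn 𝕜 S fun x ↦ ∑' i, f i x := by
  refine ⟨hS, fun x hx y hy a b ha hb hab ↦ ?_⟩
  have hax := (hsum x hx).const_smul a
  have hby := (hsum y hy).const_smul b
  calc ∑' i, f i (a • x + b • y)
      ≤ ∑' i, (a • f i x + b • f i y) :=
        (hsum _ (hS hx hy ha hb hab)).tsum_le_tsum
          (fun i ↦ (hf i).2 hx hy ha hb hab) (hax.add hby)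
    _ = a • ∑' i, f i x + b • ∑' i, f i y := by
        rw [hax.tsum_add hby, (hsum x hx).tsum_const_smul, (hsum y hy).tsum_const_smul]

theorem convexOn_rpow_neg {s : ℝ} (hs : 0 ≤ s) :
    ConvexOn ℝ (Set.Ioi 0) fun x : ℝ ↦ x ^ (-s) := by
  have hlog : ConvexOn ℝ (Set.Ioi 0) fun x ↦ s * -log x :=
    strictConcaveOn_log_Ioi.concaveOn.neg.smul hs
  have hcont : ContinuousOn (fun x ↦ s * -log x) (Set.Ioi 0) :=
    ((continuousOn_log.mono fun _ hx ↦ ne_of_gt hx).neg).const_mul s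
  have himage : Convex ℝ ((fun x ↦ s * -log x) '' Set.Ioi 0) :=
    (isPreconnected_Ioi.image _ hcont).ordConnected.convex
  refine ((convexOn_exp.subset (Set.subset_univ _) himage).comp hlog
    (exp_monotone.monotoneOn _)).congr fun x hx ↦ ?_
  rw [Function.comp_apply, rpow_def_of_pos hx, mul_neg, mul_neg, mul_comm]

theorem le_right_of_convexOn_of_even {𝕜 β : Type*} [Field 𝕜] [LinearOrder 𝕜]
    [IsStrictOrderedRing 𝕜] [AddCommGroup β] [LinearOrder β] [IsOrderedAddMonoid β] [Module 𝕜 β]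
    [IsStrictOrderedModule 𝕜 β] {f : 𝕜 → β} {S : Set 𝕜} (hf : ConvexOn 𝕜 S f)
    (heven : Function.Even f) {r y : 𝕜} (hr : r ∈ S) (hr' : -r ∈ S) (hy : y ∈ Set.Icc (-r) r) :
    f y ≤ f r := by
  simpa only [heven r, max_self] using hf.le_max_of_mem_Icc hr' hr hy

theorem tsum_int_ne_zero {M : Type*} [AddCommMonoid M] [TopologicalSpace M] [ContinuousAdd M]
    [T2Space M] {f : ℤ → M} (hpos : Summable fun n : ℕ ↦ f (n + 1))
    (hneg : Summable fun n : ℕ ↦ f (-(n + 1))) :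
    ∑' k : {k : ℤ // k ≠ 0}, f k = ∑' n : ℕ, f (n + 1) + ∑' n : ℕ, f (-(n + 1)) := by
  let g : ℤ → M := Set.indicator {k | k ≠ 0} f
  have hg_pos (n : ℕ) : g (n + 1) = f (n + 1) := Set.indicator_of_mem (by grind) f
  have hg_neg (n : ℕ) : g (-(n + 1)) = f (-(n + 1)) := Set.indicator_of_mem (by grind) f
  have hg_zero : g 0 = 0 := Set.indicator_of_notMem (by simp) f
  calc ∑' k : {k : ℤ // k ≠ 0}, f k
      = ∑' k, g k := tsum_subtype {k : ℤ | k ≠ 0} f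
    _ = ∑' n : ℕ, f (n + 1) + ∑' n : ℕ, f (-(n + 1)) := by
        rw [tsum_of_add_one_of_neg_add_one (by simpa only [hg_pos]) (by simpa only [hg_neg]),
          hg_zero, add_zero]
        simp only [hg_pos, hg_neg]

/-- The Hurwitz zeta function `ζ(s, a) = ∑ (n + a) ^ (-s)` for real arguments. Mathlib's
`hurwitzZeta` takes its parameter in `ℝ / ℤ`, which does not separate `1/2` from `3/2`. -/
noncomputable def hurwitzSum (s a : ℝ) : ℝ := ∑' n : ℕ, (n + a) ^ (-s)

/-- The series `∑_{k ≠ 0} |k + y| ^ (-s)`; the `A_P(y)` of the paper is the case `s = 2P + 1`. -/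
noncomputable def puncturedSum (s y : ℝ) : ℝ := ∑' k : {k : ℤ // k ≠ 0}, |((k : ℤ) : ℝ) + y| ^ (-s)

section Series

variable {s a : ℝ}

theorem summable_nat_add_rpow_neg (hs : 1 < s) (ha : 0 < a) :
    Summable fun n : ℕ ↦ ((n : ℝ) + a) ^ (-s) := by
  refine ((summable_one_div_nat_add_rpow a s).2 hs).congr fun n ↦ ?_
  have hna : 0 < (n : ℝ) + a := by positivity
  rw [abs_of_pos hna, rpow_neg hna.le, one_div]

theorem hurwitzSum_eq_rpow_neg_add (hs : 1 < s) (ha : 0 < a) :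
    hurwitzSum s a = a ^ (-s) + hurwitzSum s (a + 1) := by
  rw [hurwitzSum, (summable_nat_add_rpow_neg hs ha).tsum_eq_zero_add, hurwitzSum]
  simp only [Nat.cast_zero, zero_add, Nat.cast_succ, add_assoc, add_comm a]

theorem convexOn_hurwitzSum (hs : 1 < s) : ConvexOn ℝ (Set.Ioi 0) (hurwitzSum s) := by
  refine convexOn_tsum (convex_Ioi 0) (fun n ↦ ?_) fun a ha ↦ summable_nat_add_rpow_neg hs ha
  refine ((convexOn_rpow_neg (by linarith : 0 ≤ s)).translate_right (n : ℝ)).subset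
    (fun a (ha : 0 < a) ↦ ?_) (convex_Ioi 0)
  exact add_pos_of_nonneg_of_pos n.cast_nonneg ha

theorem hasSum_mellin_exp_div_one_sub_exp {s : ℂ} (hs : 1 < s.re) (ha : 0 < a) :
    HasSum (fun n : ℕ ↦ Complex.Gamma s / ((n + a : ℝ) : ℂ) ^ s)
      (mellin (fun t ↦ ((exp (-(a * t)) / (1 - exp (-t)) : ℝ) : ℂ)) s) := by
  have hgeom (t : ℝ) (ht : t ∈ Set.Ioi 0) :
      HasSum (fun n : ℕ ↦ exp (-(n + a) * t)) (exp (-(a * t)) / (1 - exp (-t))) := by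
    have hlt : exp (-t) < 1 := exp_lt_one_iff.2 (neg_neg_of_pos ht)
    refine ((hasSum_geometric_of_lt_one (exp_pos _).le hlt).mul_left _).congr_fun fun n ↦ ?_
    rw [← exp_nat_mul, ← exp_add]
    ring_nf
  have hsum : Summable fun n : ℕ ↦ ‖(1 : ℂ)‖ / ((n : ℝ) + a) ^ s.re := by
    refine (summable_nat_add_rpow_neg hs ha).congr fun n ↦ ?_
    rw [norm_one, one_div, rpow_neg (by positivity)]
  simpa only [mul_one] using hasSum_mellin (a := fun _ ↦ 1) (fun n ↦ .inr (by positivity))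
    (by linarith) (fun t ht ↦ by simpa only [one_mul] using Complex.hasSum_ofReal.2 (hgeom t ht))
    hsum

theorem integral_rpow_mul_exp_div_one_sub_exp (hs : 1 < s) (ha : 0 < a) :
    ∫ t in Set.Ioi 0, t ^ (s - 1) * exp (-(a * t)) / (1 - exp (-t)) =
      Gamma s * hurwitzSum s a := by
  have hmellin : mellin (fun t ↦ ((exp (-(a * t)) / (1 - exp (-t)) : ℝ) : ℂ)) s =
      ((∫ t in Set.Ioi 0, t ^ (s - 1) * exp (-(a * t)) / (1 - exp (-t)) : ℝ) : ℂ) := by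
    rw [mellin, ← integral_complex_ofReal]
    refine setIntegral_congr_fun measurableSet_Ioi fun t (ht : 0 < t) ↦ ?_
    simp only [smul_eq_mul, mul_div_assoc, Complex.ofReal_mul, Complex.ofReal_cpow ht.le,
      Complex.ofReal_sub, Complex.ofReal_one]
  have hsum := hasSum_mellin_exp_div_one_sub_exp (s := s) hs ha
  rw [hmellin] at hsum
  have hterm (n : ℕ) : Complex.Gamma s / ((n + a : ℝ) : ℂ) ^ (s : ℂ) =
      ((Gamma s * (n + a) ^ (-s) : ℝ) : ℂ) := by
    have hna : 0 ≤ (n : ℝ) + a := by positivity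
    rw [rpow_neg hna, ← div_eq_mul_inv, Complex.ofReal_div, Complex.Gamma_ofReal,
      Complex.ofReal_cpow hna]
  simp only [hterm, Complex.hasSum_ofReal] at hsum
  rw [← hsum.tsum_eq, tsum_mul_left, hurwitzSum]

theorem puncturedSum_eq_hurwitzSum_add {y : ℝ} (hs : 1 < s) (hy : y ∈ Set.Ioo (-1) 1) :
    puncturedSum s y = hurwitzSum s (1 + y) + hurwitzSum s (1 - y) := by
  have hy_add : 0 < 1 + y := by linarith [hy.1]
  have hy_sub : 0 < 1 - y := by linarith [hy.2]
  have hpos (n : ℕ) : |((n + 1 : ℤ) : ℝ) + y| ^ (-s) = (n + (1 + y)) ^ (-s) := by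
    push_cast
    rw [add_assoc, abs_of_pos (by positivity)]
  have hneg (n : ℕ) : |((-(n + 1) : ℤ) : ℝ) + y| ^ (-s) = (n + (1 - y)) ^ (-s) := by
    push_cast
    rw [← abs_neg, show -(-((n : ℝ) + 1) + y) = n + (1 - y) by ring, abs_of_pos (by positivity)]
  have hsplit := tsum_int_ne_zero (f := fun k : ℤ ↦ |(k : ℝ) + y| ^ (-s))
    (by simpa only [hpos] using summable_nat_add_rpow_neg hs hy_add)
    (by simpa only [hneg] using summable_nat_add_rpow_neg hs hy_sub)
  simpa only [hpos, hneg, puncturedSum, hurwitzSum] using hsplit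

theorem convexOn_puncturedSum (hs : 1 < s) : ConvexOn ℝ (Set.Ioo (-1) 1) (puncturedSum s) := by
  have hadd : ConvexOn ℝ (Set.Ioo (-1) 1) fun y ↦ hurwitzSum s (1 + y) :=
    ((convexOn_hurwitzSum hs).translate_right 1).subset
      (fun y hy ↦ show 0 < 1 + y by linarith [hy.1]) (convex_Ioo _ _)
  have hsub : ConvexOn ℝ (Set.Ioo (-1) 1) fun y ↦ hurwitzSum s (1 - y) :=
    (((convexOn_hurwitzSum hs).translate_right 1).comp_linearMap (-LinearMap.id)).subset
      (fun y hy ↦ show 0 < 1 + -y by linarith [hy.2]) (convex_Ioo _ _)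
  exact (hadd.add hsub).congr fun y hy ↦ (puncturedSum_eq_hurwitzSum_add hs hy).symm

end Series

theorem puncturedSum_even (s : ℝ) : Function.Even (puncturedSum s) := fun y ↦ by
  let e : {k : ℤ // k ≠ 0} ≃ {k : ℤ // k ≠ 0} :=
    (Equiv.neg ℤ).subtypeEquiv fun _ ↦ neg_ne_zero.symm
  refine (e.tsum_eq _).symm.trans (tsum_congr fun k ↦ ?_)
  change |((-(k : ℤ) : ℤ) : ℝ) + -y| ^ (-s) = |((k : ℤ) : ℝ) + y| ^ (-s)
  rw [Int.cast_neg, ← neg_add, abs_neg]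

theorem puncturedSum_natCast (n : ℕ) (y : ℝ) :
    puncturedSum n y = ∑' k : {k : ℤ // k ≠ 0}, (|((k : ℤ) : ℝ) + y| ^ n)⁻¹ :=
  tsum_congr fun _ ↦ by rw [rpow_neg (abs_nonneg _), rpow_natCast]

theorem puncturedSum_one_half {s : ℝ} (hs : 1 < s) :
    puncturedSum s (1 / 2) = 2 ^ s + 2 / Gamma s *
      ∫ v in Set.Ioi 0, v ^ (s - 1) * exp (-(3 * v / 2)) / (1 - exp (-v)) := by
  have hint : ∫ v in Set.Ioi 0, v ^ (s - 1) * exp (-(3 * v / 2)) / (1 - exp (-v)) =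
      Gamma s * hurwitzSum s (3 / 2) := by
    simpa only [div_mul_eq_mul_div] using
      integral_rpow_mul_exp_div_one_sub_exp hs (a := 3 / 2) (by norm_num)
  have hrec : hurwitzSum s (1 / 2) = 2 ^ s + hurwitzSum s (3 / 2) := by
    rw [hurwitzSum_eq_rpow_neg_add hs (by norm_num), one_div, inv_rpow two_pos.le,
      rpow_neg two_pos.le, inv_inv]
    norm_num
  calc puncturedSum s (1 / 2)
      = hurwitzSum s (3 / 2) + hurwitzSum s (1 / 2) := by
        rw [puncturedSum_eq_hurwitzSum_add hs (by norm_num)]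
        norm_num
    _ = 2 ^ s + 2 * hurwitzSum s (3 / 2) := by rw [hrec]; ring
    _ = 2 ^ s + 2 / Gamma s * (Gamma s * hurwitzSum s (3 / 2)) := by
        have hGamma : Gamma s ≠ 0 := (Gamma_pos_of_pos (by linarith)).ne'
        field_simp
    _ = _ := by rw [hint]

theorem stmt15_general {s : ℝ} (hs : 1 < s) :
    puncturedSum s (1 / 2) = 2 ^ s + 2 / Gamma s *
        ∫ v in Set.Ioi 0, v ^ (s - 1) * exp (-(3 * v / 2)) / (1 - exp (-v)) ∧
      ∀ r < 1, ∀ y ∈ Set.Icc (-r) r, puncturedSum s y ≤ puncturedSum s r := by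
  refine ⟨puncturedSum_one_half hs, fun r hr y hy ↦ ?_⟩
  have hr_nonneg : 0 ≤ r := by linarith [hy.1, hy.2]
  exact le_right_of_convexOn_of_even (convexOn_puncturedSum hs) (puncturedSum_even s)
    ⟨by linarith, hr⟩ ⟨by linarith, by linarith⟩ hy

/-- Eq. (62) of the paper together with the maximality claim: the series
`A_P(y) = ∑_{k ≠ 0} |k + y|^{−(2P+1)}` attains its maximum over `[−1/2, 1/2]`
at `y = 1/2`, and its value there is `2^{2P+1} + (2/(2P)!)·∫_0^∞ v^{2P}·e^{−3v/2}/(1 − e^{−v}) dv`. -/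
theorem stmt15 (P : ℕ) (hP : 1 ≤ P)
    (A : ℝ → ℝ)
    (hA : ∀ y : ℝ, A y = ∑' k : {k : ℤ // k ≠ 0}, (|((k : ℤ) : ℝ) + y| ^ (2 * P + 1))⁻¹) :
    A (1/2) = 2 ^ (2 * P + 1)
        + 2 / (Nat.factorial (2 * P) : ℝ) *
          ∫ v in Set.Ioi (0 : ℝ), v ^ (2 * P) * Real.exp (-(3 * v / 2)) / (1 - Real.exp (-v)) ∧
      ∀ y ∈ Set.Icc (-(1/2) : ℝ) (1/2), A y ≤ A (1/2) := by
  obtain rfl : A = puncturedSum (2 * P + 1 : ℕ) :=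
    funext fun y ↦ (hA y).trans (puncturedSum_natCast _ y).symm
  have h := stmt15_general (s := (2 * P + 1 : ℕ)) (by norm_cast; omega)
  refine ⟨?_, h.2 _ (by norm_num)⟩
  rw [h.1, rpow_natCast, Nat.cast_succ, Gamma_nat_eq_factorial, add_sub_cancel_right]
  simp only [rpow_natCast]
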